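/- Let x be a fractional Brownian motion with Hurst parameter ν ∈ (0,1/2), let q ≥ 1 and i ≥ 1 be integers with i ≤ 1/(2ν). Then there is a constant K, depending only on ν, i and q, such that for all n ≥ 1 and all points 0 ≤ s ≤ t ≤ 1 of the uniform n-partition: (a) if q ≥ 1/(2ν), or if q < 1/(2ν) and q > i, then E[|J_s^t(x^i;h^{n,q})|²] ≤ K·n·(t−s)^{2iν+1}; (b) if q < 1/(2ν) and q ≤ i, then E[|J_s^t(x^i;h^{n,q})|²] ≤ K·n^{2−2qν}·(t−s)^{2+2iν−2qν}. -/

import Mathlib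

/-!
The rescaled values `z_k = n^ν x_{k/n}` form a centred Gaussian vector whose unit increments
`ξ_k = z_{k+1} - z_k` are standard. At partition points the discrete integral is, up to the factor
`1 / (n^{iν} i!)`, the sum over `a ≤ k < b` of `(z_k - z_a)^i H_q(ξ_k)` (`Jtwo_eq`), so its second
moment is a double sum of the expectations `E[U^i H_q(ξ_k) V^i H_q(ξ_l)]` with `U = z_k - z_a` and
`V = z_l - z_a`.

Each expectation is estimated by Gaussian integration by parts (`gauss_ibp`), which contracts
one factor of a Hermite polynomial with one of the other factors. Since `ν < 1/2`, the covariance of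
a unit increment with any other increment is at most `1` in absolute value (`abs_incCov_le`),
whereas `U` and `V` have standard deviation at most `A = (b - a)^ν`. Either some contraction pairs
`ξ_k` with `ξ_l`, which gives a factor `r = E[ξ_k ξ_l]` and at most `A^{2i}` from the rest, or all
`2q` Hermite factors are contracted with large factors, which leaves `A^{2i-2q}` and is possible
only if `2q ≤ 2i`. This is `moment_bound`, proved by the combinatorial recursion `wick_rec`.

For `ν < 1/2` the covariances `E[ξ_k ξ_l]` are absolutely summable: they telescope by concavity of
`t ↦ t^{2ν}` (`sum_absCorr_le`). With `N = b - a`, the double sum is therefore at most a constant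
times `N · N^{2iν} + N^2 · N^{2(i-q)ν}`, the second term being present only if `q ≤ i`
(`second_moment`). Comparing the exponents `1 + 2iν` and `2 + 2iν - 2qν` gives the two regimes.
-/

open MeasureTheory ProbabilityTheory Filter
open scoped ENNReal NNReal

noncomputable section

variable {Ω : Type*} [MeasurableSpace Ω]

/-- The smallest point `⌈n s⌉ / n` of the uniform `n`-partition that is `≥ s`. -/
def eps (n : ℕ) (s : ℝ) : ℝ := (⌈(n : ℝ) * s⌉ : ℝ) / n

/-- Discrete integral `J_s^t(f;h)` of a two-parameter process `f` against the
increments `h k = h_{t_k t_{k+1}}` along the uniform `n`-partition. -/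
def Jtwo (n : ℕ) (f : ℝ → ℝ → Ω → ℝ) (h : ℕ → Ω → ℝ) (s t : ℝ) (ω : Ω) : ℝ :=
  ∑ k ∈ Finset.range n,
    if s ≤ (k : ℝ) / n ∧ (k : ℝ) / n < t then f (eps n s) ((k : ℝ) / n) ω * h k ω else 0

/-- Discrete integral `J_s^t(y;h)` of a one-parameter path `y`. -/
def Jone (n : ℕ) (y : ℝ → Ω → ℝ) (h : ℕ → Ω → ℝ) (s t : ℝ) (ω : Ω) : ℝ :=
  ∑ k ∈ Finset.range n,
    if s ≤ (k : ℝ) / n ∧ (k : ℝ) / n < t then (y ((k : ℝ) / n) ω - y (eps n s) ω) * h k ω else 0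

/-- A scalar `(L_p, ν, ℓ)`-rough path over the continuous process `X`. -/
def IsRoughPath (P : Measure Ω) (p : ℝ≥0∞) (ν : ℝ) (ℓ : ℕ) (C : ℝ)
    (X : ℝ → Ω → ℝ) (x : ℕ → ℝ → ℝ → Ω → ℝ) : Prop :=
  (∀ i s t, Measurable (x i s t)) ∧
  (∀ ω, ContinuousOn (fun t => X t ω) (Set.Icc 0 1)) ∧
  (∀ s t ω, x 0 s t ω = 1) ∧
  (∀ s t ω, x 1 s t ω = X t ω - X s ω) ∧
  (∀ k, 1 ≤ k → k ≤ ℓ - 1 → ∀ s u t : ℝ, 0 ≤ s → s ≤ u → u ≤ t → t ≤ 1 → ∀ ω,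
    x k s t ω = ∑ j ∈ Finset.range (k + 1), x (k - j) s u ω * x j u t ω) ∧
  (∀ k, k ≤ ℓ - 1 → ∀ s t : ℝ, 0 ≤ s → s ≤ t → t ≤ 1 →
    eLpNorm (x k s t) p P ≤ ENNReal.ofReal ((C * (t - s) ^ ν) ^ k))

/-- `(y^{(0)},…,y^{(ℓ-1)})` is controlled by the rough path `x` in `L₂`,
with remainder constant `K₀`. -/
def Controlled (P : Measure Ω) (ν : ℝ) (ℓ : ℕ) (K₀ : ℝ)
    (x : ℕ → ℝ → ℝ → Ω → ℝ) (y : ℕ → ℝ → Ω → ℝ) : Prop :=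
  (∀ k, k ≤ ℓ - 1 → ∀ t, Measurable (y k t)) ∧
  (∀ k, k ≤ ℓ - 1 → ∀ ω, ContinuousOn (fun t => y k t ω) (Set.Icc 0 1)) ∧
  (∀ ω, y 0 0 ω = 0) ∧
  (∀ k, k ≤ ℓ - 1 → ∀ s t : ℝ, 0 ≤ s → s ≤ t → t ≤ 1 →
    eLpNorm (fun ω => y k t ω - y k s ω -
        ∑ j ∈ Finset.Icc 1 (ℓ - 1 - k), y (k + j) s ω * x j s t ω) 2 P
      ≤ ENNReal.ofReal (K₀ * (t - s) ^ (((ℓ - k : ℕ) : ℝ) * ν)))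

/-- Covariance of one-dimensional fractional Brownian motion. -/
def fbmCov (ν s t : ℝ) : ℝ := (s ^ (2 * ν) + t ^ (2 * ν) - |t - s| ^ (2 * ν)) / 2

/-- `x` is a fractional Brownian motion with Hurst parameter `ν` on `[0,1]`:
a measurable process with (a.s.) continuous sample paths all of whose finite
linear combinations are centered Gaussian with the fBm covariance. -/
def IsFBM (P : Measure Ω) (ν : ℝ) (x : ℝ → Ω → ℝ) : Prop :=
  (∀ t, Measurable (x t)) ∧
  (∀ᵐ ω ∂P, ContinuousOn (fun t => x t ω) (Set.Icc 0 1)) ∧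
  ∀ (m : ℕ) (t : Fin m → ℝ), (∀ j, t j ∈ Set.Icc (0 : ℝ) 1) →
    ∀ a : Fin m → ℝ,
      P.map (fun ω => ∑ j, a j * x (t j) ω) =
        gaussianReal 0 (∑ j, ∑ k, a j * a k * fbmCov ν (t j) (t k)).toNNReal

/-- Correlation function of the increments of fBm. -/
def rho (ν : ℝ) (k : ℤ) : ℝ :=
  (|(k : ℝ) + 1| ^ (2 * ν) + |(k : ℝ) - 1| ^ (2 * ν) - 2 * |(k : ℝ)| ^ (2 * ν)) / 2

/-- Hermite polynomial `H_q` (probabilists' normalization). -/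
def Hq (q : ℕ) (t : ℝ) : ℝ := Polynomial.aeval t (Polynomial.hermite q)

/-- The increments `h^{n,q}_{t_k t_{k+1}} = H_q(n^ν δx_{t_k t_{k+1}})`. -/
def hermIncr (x : ℝ → Ω → ℝ) (ν : ℝ) (n q : ℕ) (k : ℕ) (ω : Ω) : ℝ :=
  Hq q ((n : ℝ) ^ ν * (x (((k : ℝ) + 1) / n) ω - x ((k : ℝ) / n) ω))

/-- Canonical rough-path lift of a one-dimensional process: `x^i_{st} = (δx_{st})^i / i!`. -/
def xlift (x : ℝ → Ω → ℝ) (i : ℕ) (s t : ℝ) (ω : Ω) : ℝ :=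
  (x t ω - x s ω) ^ i / (Nat.factorial i : ℝ)

/-- Hermite coefficient `a_q = (1/q!) ∫ f H_q dγ` of `f` in `L²(γ)`. -/
def hermCoeff (f : ℝ → ℝ) (q : ℕ) : ℝ :=
  (Nat.factorial q : ℝ)⁻¹ * ∫ t, f t * Hq q t ∂(gaussianReal 0 1)

/-- `c_p = E|N|^p = 2^{p/2} Γ((p+1)/2)/√π`. -/
def cconst (r : ℝ) : ℝ := (2 : ℝ) ^ (r / 2) * Real.Gamma ((r + 1) / 2) / Real.sqrt Real.pi

/-! ### Hermite polynomials and one-dimensional Gaussian integration by parts -/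

open Polynomial in
lemma hermite_derivative (n : ℕ) :
    derivative (hermite (n + 1)) = ((n : ℤ[X]) + 1) * hermite n := by
  induction n with
  | zero => simp
  | succ n ih =>
    rw [hermite_succ (n + 1), derivative_sub, derivative_mul, ih, derivative_mul, hermite_succ n]
    simp
    ring

/-- `f` has moments of all orders: this class of random variables is stable under products. -/
def AllLp (P : Measure Ω) (f : Ω → ℝ) : Prop := ∀ p : ℝ≥0∞, p ≠ ∞ → MemLp f p P

lemma AllLp.mul {P : Measure Ω} {f g : Ω → ℝ} (hf : AllLp P f) (hg : AllLp P g) :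
    AllLp P (fun ω => f ω * g ω) := by
  intro p hp
  have : ENNReal.HolderTriple (2 * p) (2 * p) p := ⟨by
    rw [ENNReal.mul_inv (by simp) (by simp), ← add_mul, ENNReal.inv_two_add_inv_two, one_mul]⟩
  exact (hg (2 * p) (ENNReal.mul_ne_top (by simp) hp)).mul' (hf (2 * p)
    (ENNReal.mul_ne_top (by simp) hp))

lemma AllLp.add {P : Measure Ω} {f g : Ω → ℝ} (hf : AllLp P f) (hg : AllLp P g) :
    AllLp P (fun ω => f ω + g ω) := fun p hp => (hf p hp).add (hg p hp)

lemma AllLp.const {P : Measure Ω} [IsFiniteMeasure P] (c : ℝ) : AllLp P (fun _ => c) :=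
  fun _ _ => memLp_const c

lemma AllLp.pow {P : Measure Ω} [IsFiniteMeasure P] {f : Ω → ℝ} (hf : AllLp P f) (k : ℕ) :
    AllLp P (fun ω => f ω ^ k) := by
  induction k with
  | zero => simpa using AllLp.const 1
  | succ k ih => simpa [pow_succ] using ih.mul hf

lemma AllLp.eval {P : Measure Ω} [IsFiniteMeasure P] {f : Ω → ℝ} (hf : AllLp P f)
    (p : Polynomial ℝ) : AllLp P (fun ω => p.eval (f ω)) := by
  induction p using Polynomial.induction_on' with
  | add p q hp hq => simpa using hp.add hq
  | monomial n a => simpa using (AllLp.const a).mul (hf.pow n)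

lemma Hq_eq_eval (q : ℕ) (t : ℝ) :
    Hq q t = ((Polynomial.hermite q).map (Int.castRingHom ℝ)).eval t := by
  rw [Hq, Polynomial.eval_map, Polynomial.aeval_def]; rfl

lemma AllLp.Hq {P : Measure Ω} [IsFiniteMeasure P] {f : Ω → ℝ} (hf : AllLp P f) (q : ℕ) :
    AllLp P (fun ω => Hq q (f ω)) := by
  simp only [Hq_eq_eval]; exact hf.eval _

lemma AllLp.integrable {P : Measure Ω} [IsFiniteMeasure P] {f : Ω → ℝ} (hf : AllLp P f) :
    Integrable f P := memLp_one_iff_integrable.1 (hf 1 (by simp))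

lemma allLp_id_gaussian : AllLp (gaussianReal 0 1) (fun x => x) :=
  fun p hp => memLp_id_gaussianReal' p hp

lemma hasDerivAt_gaussianPDFReal (x : ℝ) :
    HasDerivAt (gaussianPDFReal 0 1) (-x * gaussianPDFReal 0 1 x) x := by
  have h : HasDerivAt (fun x : ℝ => -x ^ 2 / 2) (-x) x := by
    have := ((hasDerivAt_pow 2 x).neg).div_const 2
    exact this.congr_deriv (by simp; ring)
  have h2 := h.exp.const_mul (√(2 * Real.pi))⁻¹
  have e : gaussianPDFReal 0 1 = fun x => (√(2 * Real.pi))⁻¹ * Real.exp (-x ^ 2 / 2) := by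
    ext y; simp [gaussianPDFReal]
  rw [e]
  exact h2.congr_deriv (by ring)

lemma integrable_mul_pdf (p : Polynomial ℝ) :
    Integrable (fun x => p.eval x * gaussianPDFReal 0 1 x) := by
  have h := (allLp_id_gaussian.eval p).integrable
  rw [gaussianReal_of_var_ne_zero _ one_ne_zero, integrable_withDensity_iff_integrable_smul'
    (measurable_gaussianPDF 0 1) (ae_of_all _ fun _ => gaussianPDF_lt_top)] at h
  simpa [toReal_gaussianPDF, mul_comm] using h

lemma integral_lin3 {X : Type*} [MeasurableSpace X] {μ : Measure X} {f g h : X → ℝ}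
    (hf : Integrable f μ) (hg : Integrable g μ) (hh : Integrable h μ) (α β γ : ℝ) :
    ∫ x, (α * f x + β * g x + γ * h x) ∂μ
      = α * (∫ x, f x ∂μ) + β * (∫ x, g x ∂μ) + γ * (∫ x, h x ∂μ) := by
  have h1 : Integrable (fun x => α * f x + β * g x) μ := (hf.const_mul α).add (hg.const_mul β)
  rw [integral_add h1 (hh.const_mul γ), integral_add (hf.const_mul α) (hg.const_mul β)]
  simp only [integral_const_mul]

/-- Stein's identity for polynomials under the standard Gaussian law. -/
lemma stein_poly (p : Polynomial ℝ) :
    ∫ x, x * p.eval x ∂gaussianReal 0 1 = ∫ x, p.derivative.eval x ∂gaussianReal 0 1 := by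
  rw [integral_gaussianReal_eq_integral_smul one_ne_zero,
    integral_gaussianReal_eq_integral_smul one_ne_zero]
  have h := integral_mul_deriv_eq_deriv_mul_of_integrable (u := fun x => p.eval x)
    (u' := fun x => p.derivative.eval x) (v := gaussianPDFReal 0 1)
    (v' := fun x => -x * gaussianPDFReal 0 1 x)
    (fun x _ => p.hasDerivAt x) (fun x _ => hasDerivAt_gaussianPDFReal x) ?_
    (integrable_mul_pdf _) (integrable_mul_pdf _)
  · have e1 : ∀ x : ℝ, p.eval x * (-x * gaussianPDFReal 0 1 x)
        = -(gaussianPDFReal 0 1 x • (x * p.eval x)) := fun x => by simp only [smul_eq_mul]; ring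
    have e2 : ∀ x : ℝ, p.derivative.eval x * gaussianPDFReal 0 1 x
        = gaussianPDFReal 0 1 x • p.derivative.eval x := fun x => by
      simp only [smul_eq_mul]; ring
    simp only [e1, e2, integral_neg, neg_inj] at h
    exact h
  · convert integrable_mul_pdf (-Polynomial.X * p) using 2
    simp; ring

/-- Gaussian integration by parts lowers the degree of the Hermite polynomial. -/
lemma stein_hermite (n : ℕ) (p : Polynomial ℝ) :
    ∫ x, Hq (n + 1) x * p.eval x ∂gaussianReal 0 1
      = ∫ x, Hq n x * p.derivative.eval x ∂gaussianReal 0 1 := by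
  set h := (Polynomial.hermite n).map (Int.castRingHom ℝ) with hh
  have key := stein_poly (h * p)
  have I : ∀ r : Polynomial ℝ, Integrable (fun x => r.eval x) (gaussianReal 0 1) :=
    fun r => (allLp_id_gaussian.eval r).integrable
  have e1 : ∀ x, Hq (n + 1) x * p.eval x
      = x * (h * p).eval x - (h.derivative * p).eval x := fun x => by
    rw [Hq_eq_eval, Polynomial.hermite_succ]
    simp [hh, Polynomial.derivative_map]; ring
  have e2 : ∀ x, Hq n x * p.derivative.eval x
      = (h * p).derivative.eval x - (h.derivative * p).eval x := fun x => by
    rw [Hq_eq_eval, Polynomial.derivative_mul]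
    simp [hh]
  simp only [e1, e2]
  rw [integral_sub _ (I _), integral_sub (I _) (I _), key]
  exact (I (Polynomial.X * (h * p))).congr (ae_of_all _ fun x => by simp)

/-! ### Integration by parts for jointly Gaussian variables -/

section IBP

variable {E : Type*} [NormedAddCommGroup E] [NormedSpace ℝ E] [MeasurableSpace E] [BorelSpace E]

lemma allLp_of_gaussian {P : Measure Ω} {W : Ω → E} (hW : HasGaussianLaw W P)
    (L : E →L[ℝ] ℝ) : AllLp P (fun ω => L (W ω)) := fun _ hp => (hW.map_fun L).memLp hp

/-- Gaussian integration by parts for a jointly Gaussian vector, with the random variables given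
as linear functionals `e, u, v, h` of one centred Gaussian vector `W`, and `e ∘ W` of variance one:
subtracting from each variable its projection on `e ∘ W` leaves a vector independent of
`e ∘ W`, and the one-dimensional identity applies conditionally on that vector. -/
lemma gauss_ibp [SecondCountableTopology E] {P : Measure Ω} [IsProbabilityMeasure P]
    {W : Ω → E} (hW : HasGaussianLaw W P) (hWm : Measurable W)
    (hmean : ∀ L : E →L[ℝ] ℝ, ∫ ω, L (W ω) ∂P = 0)
    (e u v h : E →L[ℝ] ℝ) (he : P.map (fun ω => e (W ω)) = gaussianReal 0 1)
    (a b p q : ℕ) :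
    ∫ ω, Hq (p + 1) (e (W ω)) * ((u (W ω)) ^ a * (v (W ω)) ^ b * Hq q (h (W ω))) ∂P =
      a * (∫ ω, e (W ω) * u (W ω) ∂P) *
        (∫ ω, Hq p (e (W ω)) * ((u (W ω)) ^ (a - 1) * (v (W ω)) ^ b * Hq q (h (W ω))) ∂P)
      + b * (∫ ω, e (W ω) * v (W ω) ∂P) *
        (∫ ω, Hq p (e (W ω)) * ((u (W ω)) ^ a * (v (W ω)) ^ (b - 1) * Hq q (h (W ω))) ∂P)
      + q * (∫ ω, e (W ω) * h (W ω) ∂P) *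
        (∫ ω, Hq p (e (W ω)) * ((u (W ω)) ^ a * (v (W ω)) ^ b * Hq (q - 1) (h (W ω))) ∂P) := by
  have A : ∀ L : E →L[ℝ] ℝ, AllLp P (fun ω => L (W ω)) := allLp_of_gaussian hW
  set cu := ∫ ω, e (W ω) * u (W ω) ∂P with hcu
  set cv := ∫ ω, e (W ω) * v (W ω) ∂P with hcv
  set ch := ∫ ω, e (W ω) * h (W ω) ∂P with hch
  have hee : ∫ ω, e (W ω) * e (W ω) ∂P = 1 := by
    have h1 := variance_fun_id_gaussianReal (μ := 0) (v := 1)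
    rw [variance_of_integral_eq_zero (by fun_prop) (by simp)] at h1
    have h2 : ∫ ω, (e (W ω)) ^ 2 ∂P = ∫ x, x ^ 2 ∂(P.map (fun ω => e (W ω))) := by
      rw [integral_map (by fun_prop) (by fun_prop)]
    simp only [← sq]
    rw [h2, he]
    simpa using h1
  -- the residuals of `u`, `v`, `h` after projection on `e`, uncorrelated with `e ∘ W`
  let R : Fin 3 → E →L[ℝ] ℝ := ![u - cu • e, v - cv • e, h - ch • e]
  let L : E →L[ℝ] ((Fin 1 → ℝ) × (Fin 3 → ℝ)) :=
    (ContinuousLinearMap.pi fun _ => e).prod (ContinuousLinearMap.pi R)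
  have hI : IndepFun (fun ω (_ : Fin 1) => e (W ω)) (fun ω j => R j (W ω)) P := by
    refine HasGaussianLaw.indepFun_of_covariance_eval (X := fun (_ : Fin 1) ω => e (W ω))
      (Y := fun j ω => R j (W ω)) (hW.map_fun L) ?_
    intro _ j
    rw [covariance_eq_sub (A _ 2 (by simp)) (A _ 2 (by simp))]
    rw [hmean e, zero_mul, sub_zero]
    have aux : ∀ w : E →L[ℝ] ℝ, ∫ ω, ((fun ω => e (W ω)) *
        fun ω => (w - (∫ ω, e (W ω) * w (W ω) ∂P) • e) (W ω)) ω ∂P = 0 := by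
      intro w
      have : ∀ ω, ((fun ω => e (W ω)) *
          fun ω => (w - (∫ ω, e (W ω) * w (W ω) ∂P) • e) (W ω)) ω
          = e (W ω) * w (W ω) - (∫ ω, e (W ω) * w (W ω) ∂P) * (e (W ω) * e (W ω)) := by
        intro ω; simp; ring
      simp only [this]
      rw [integral_sub ((A e).mul (A w)).integrable
        (((A e).mul (A e)).integrable.const_mul _), integral_const_mul, hee]
      ring
    fin_cases j
    · exact aux u
    · exact aux v
    · exact aux h
  have hI2 : IndepFun (fun ω => e (W ω)) (fun ω j => R j (W ω)) P :=
    hI.comp (φ := fun x : Fin 1 → ℝ => x 0) (ψ := id) (by fun_prop) measurable_id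
  set ν := P.map (fun ω j => R j (W ω)) with hν
  have hRm : Measurable (fun ω j => R j (W ω)) :=
    measurable_pi_lambda _ fun j => (R j).continuous.measurable.comp hWm
  have hem : Measurable (fun ω => e (W ω)) := e.continuous.measurable.comp hWm
  have : IsProbabilityMeasure ν := Measure.isProbabilityMeasure_map hRm.aemeasurable
  have hprod : P.map (fun ω => (e (W ω), fun j => R j (W ω))) = (gaussianReal 0 1).prod ν := by
    rw [(indepFun_iff_map_prod_eq_prod_map_map hem.aemeasurable hRm.aemeasurable).1 hI2, he]
  have hHm : ∀ q, Continuous (Hq q) := fun q => by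
    simp only [funext (Hq_eq_eval q)]; exact Polynomial.continuous _
  -- transfer of an expectation to the product space
  have T : ∀ a b p q : ℕ,
      ∫ ω, Hq p (e (W ω)) * ((u (W ω)) ^ a * (v (W ω)) ^ b * Hq q (h (W ω))) ∂P =
      ∫ y, ∫ x, Hq p x * ((cu * x + y 0) ^ a * (cv * x + y 1) ^ b * Hq q (ch * x + y 2))
        ∂gaussianReal 0 1 ∂ν
      ∧ Integrable (fun y : Fin 3 → ℝ => ∫ x, Hq p x *
        ((cu * x + y 0) ^ a * (cv * x + y 1) ^ b * Hq q (ch * x + y 2)) ∂gaussianReal 0 1) ν := by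
    intro a b p q
    let G : ℝ × (Fin 3 → ℝ) → ℝ := fun z => Hq p z.1 *
      ((cu * z.1 + z.2 0) ^ a * (cv * z.1 + z.2 1) ^ b * Hq q (ch * z.1 + z.2 2))
    have hGm : Continuous G := by
      have := hHm p
      have := hHm q
      fun_prop
    have hGe : ∀ ω, G (e (W ω), fun j => R j (W ω))
        = Hq p (e (W ω)) * ((u (W ω)) ^ a * (v (W ω)) ^ b * Hq q (h (W ω))) := by
      intro ω; simp [G, R]
    have hG_int : Integrable G ((gaussianReal 0 1).prod ν) := by
      rw [← hprod, integrable_map_measure hGm.aestronglyMeasurable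
        (hem.prodMk hRm).aemeasurable]
      refine Integrable.congr (((A e).Hq p).mul ((((A u).pow a).mul ((A v).pow b)).mul
        ((A h).Hq q))).integrable (ae_of_all _ fun ω => (hGe ω).symm)
    constructor
    · simp only [← hGe]
      rw [← integral_map (φ := fun ω => (e (W ω), fun j => R j (W ω)))
        (hem.prodMk hRm).aemeasurable hGm.aestronglyMeasurable,
        hprod, integral_prod_symm _ hG_int]
    · exact hG_int.integral_prod_right
  rw [(T a b (p + 1) q).1, (T (a - 1) b p q).1, (T a (b - 1) p q).1, (T a b p (q - 1)).1,
    ← integral_lin3 (T (a - 1) b p q).2 (T a (b - 1) p q).2 (T a b p (q - 1)).2]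
  congr 1
  ext y
  -- one-dimensional integration by parts at a fixed value `y` of the residuals
  let lin : ℝ → ℝ → Polynomial ℝ := fun c d => Polynomial.C c * Polynomial.X + Polynomial.C d
  let H : ℕ → Polynomial ℝ := fun q => (Polynomial.hermite q).map (Int.castRingHom ℝ)
  let F : ℕ → ℕ → ℕ → Polynomial ℝ := fun a b q =>
    lin cu (y 0) ^ a * lin cv (y 1) ^ b * (H q).comp (lin ch (y 2))
  have hF : ∀ a b q x, (F a b q).eval x
      = (cu * x + y 0) ^ a * (cv * x + y 1) ^ b * Hq q (ch * x + y 2) := by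
    intro a b q x; simp [F, lin, H, Hq_eq_eval]
  have hH : (H q).derivative = (q : Polynomial ℝ) * H (q - 1) := by
    cases q with
    | zero => simp [H]
    | succ q =>
      simp only [H, Polynomial.derivative_map, hermite_derivative]
      simp
  have hFd : (F a b q).derivative = Polynomial.C (a * cu) * F (a - 1) b q
      + Polynomial.C (b * cv) * F a (b - 1) q + Polynomial.C (q * ch) * F a b (q - 1) := by
    simp only [F, Polynomial.derivative_mul, Polynomial.derivative_pow,
      Polynomial.derivative_comp, hH]
    simp [lin]
    ring
  have I : ∀ a b q, Integrable (fun x => Hq p x * (F a b q).eval x) (gaussianReal 0 1) :=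
    fun a b q => ((allLp_id_gaussian.Hq p).mul (allLp_id_gaussian.eval _)).integrable
  simp only [← hF]
  rw [stein_hermite, hFd, ← integral_lin3 (I _ _ _) (I _ _ _) (I _ _ _)]
  congr 1
  ext x
  simp
  ring

end IBP

/-! ### Moments of products of powers and Hermite polynomials -/

/-- The bound `|r| A ^ s + A ^ (s - d)`, where the second term is present only if `d ≤ s`.
Here `s` counts the large factors (of size `A`), and `d` the Hermite factors, all of
which have to be contracted with large factors to produce the second term. -/
def wickBd (r A : ℝ) (s d : ℕ) : ℝ := |r| * A ^ s + if d ≤ s then A ^ (s - d) else 0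

lemma wickBd_succ {r A : ℝ} (hA : 1 ≤ A) (s d : ℕ) :
    wickBd r A s d ≤ wickBd r A (s + 1) (d + 1) := by
  have h : A ^ s ≤ A ^ (s + 1) := pow_le_pow_right₀ hA (Nat.le_succ s)
  have h2 := mul_le_mul_of_nonneg_left h (abs_nonneg r)
  simp only [wickBd, add_le_add_iff_right, Nat.add_sub_add_right]
  linarith

lemma abs_mul_wickBd {r A : ℝ} (hA : 1 ≤ A) (hr : |r| ≤ 1) (s d d' : ℕ) :
    |r| * wickBd r A s d ≤ 2 * wickBd r A s d' := by
  have h0 : 0 ≤ A := by linarith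
  have h1 : wickBd r A s d ≤ 2 * A ^ s := by
    unfold wickBd
    have := mul_le_mul_of_nonneg_right hr (pow_nonneg h0 s)
    split_ifs
    · have := pow_le_pow_right₀ hA (Nat.sub_le s d)
      linarith
    · have := pow_nonneg h0 s
      linarith
  have h2 : |r| * A ^ s ≤ wickBd r A s d' := by
    unfold wickBd
    split_ifs
    · have := pow_nonneg h0 (s - d'); linarith
    · linarith
  have := mul_le_mul_of_nonneg_left h1 (abs_nonneg r)
  linarith

/-- If `m a b p q` satisfies the recursions that Gaussian integration by parts gives for
`E[U^a V^b H_p(ξ) H_q(η)]`, with all covariances between large and small variables bounded by `1`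
and `r` the covariance of `ξ` and `η`, then `m a b p q` is controlled by `wickBd`:
either some contraction pairs `ξ` with `η`, which costs `|r|`, or each of the `p + q` Hermite
factors consumes one of the `a + b` large factors. -/
lemma wick_rec (M : ℕ → ℝ) (hM : ∀ k, 0 ≤ M k) (p q a b : ℕ) : ∃ C : ℝ, 0 ≤ C ∧
    ∀ (m : ℕ → ℕ → ℕ → ℕ → ℝ) (c₁ c₂ c₃ c₄ r A : ℝ), |c₁| ≤ 1 → |c₂| ≤ 1 → |c₃| ≤ 1 → |c₄| ≤ 1 →
      |r| ≤ 1 → 1 ≤ A →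
      (∀ a b, |m a b 0 0| ≤ M (a + b) * A ^ (a + b)) →
      (∀ a b q, m a b 0 (q + 1) = a * c₃ * m (a - 1) b 0 q + b * c₄ * m a (b - 1) 0 q) →
      (∀ a b p q, m a b (p + 1) q = a * c₁ * m (a - 1) b p q + b * c₂ * m a (b - 1) p q
        + q * r * m a b p (q - 1)) →
      |m a b p q| ≤ C * wickBd r A (a + b) (p + q) := by
  -- one contraction of a Hermite factor with a large factor
  have key : ∀ {k s d : ℕ} {c x C r A : ℝ}, 0 ≤ C → |c| ≤ 1 → 1 ≤ A →
      (k ≠ 0 → |x| ≤ C * wickBd r A s d) →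
      |k * c * x| ≤ k * C * wickBd r A (s + 1) (d + 1) := by
    intro k s d c x C r A hC hc hA hx
    rcases Nat.eq_zero_or_pos k with rfl | hk
    · simp
    · have h1 := (hx hk.ne').trans (mul_le_mul_of_nonneg_left (wickBd_succ hA s d) hC)
      rw [abs_mul, abs_mul, Nat.abs_cast, mul_assoc, mul_assoc]
      refine mul_le_mul_of_nonneg_left ?_ (Nat.cast_nonneg k)
      calc |c| * |x| ≤ 1 * |x| := mul_le_mul_of_nonneg_right hc (abs_nonneg x)
        _ ≤ _ := by rw [one_mul]; exact h1
  induction p generalizing q a b with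
  | zero =>
    induction q generalizing a b with
    | zero =>
      refine ⟨M (a + b), hM _, ?_⟩
      intro m c₁ c₂ c₃ c₄ r A _ _ _ _ _ hA h0 _ _
      refine (h0 a b).trans (mul_le_mul_of_nonneg_left ?_ (hM _))
      have : 0 ≤ |r| * A ^ (a + b) := by positivity
      simp [wickBd, this]
    | succ q ih =>
      obtain ⟨C₁, hC₁, h₁⟩ := ih (a - 1) b
      obtain ⟨C₂, hC₂, h₂⟩ := ih a (b - 1)
      refine ⟨a * C₁ + b * C₂, by positivity, ?_⟩
      intro m c₁ c₂ c₃ c₄ r A k₁ k₂ k₃ k₄ hr hA h0 hq hp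
      have i₁ := h₁ m c₁ c₂ c₃ c₄ r A k₁ k₂ k₃ k₄ hr hA h0 hq hp
      have i₂ := h₂ m c₁ c₂ c₃ c₄ r A k₁ k₂ k₃ k₄ hr hA h0 hq hp
      rw [hq]
      refine (abs_add_le _ _).trans ?_
      rw [add_mul]
      refine add_le_add ?_ ?_
      · rcases Nat.eq_zero_or_pos a with rfl | ha
        · simp
        · have := key (k := a) hC₁ k₃ hA (fun _ => i₁)
          rwa [show a - 1 + b + 1 = a + b by omega] at this
      · rcases Nat.eq_zero_or_pos b with rfl | hb
        · simp
        · have := key (k := b) hC₂ k₄ hA (fun _ => i₂)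
          rwa [show a + (b - 1) + 1 = a + b by omega] at this
  | succ p ih =>
    obtain ⟨C₁, hC₁, h₁⟩ := ih q (a - 1) b
    obtain ⟨C₂, hC₂, h₂⟩ := ih q a (b - 1)
    obtain ⟨C₃, hC₃, h₃⟩ := ih (q - 1) a b
    refine ⟨a * C₁ + b * C₂ + q * C₃ * 2, by positivity, ?_⟩
    intro m c₁ c₂ c₃ c₄ r A k₁ k₂ k₃ k₄ hr hA h0 hq hp
    have i₁ := h₁ m c₁ c₂ c₃ c₄ r A k₁ k₂ k₃ k₄ hr hA h0 hq hp
    have i₂ := h₂ m c₁ c₂ c₃ c₄ r A k₁ k₂ k₃ k₄ hr hA h0 hq hp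
    have i₃ := h₃ m c₁ c₂ c₃ c₄ r A k₁ k₂ k₃ k₄ hr hA h0 hq hp
    rw [hp]
    refine (abs_add_three _ _ _).trans ?_
    rw [add_mul, add_mul]
    have e : p + 1 + q = p + q + 1 := by omega
    refine add_le_add (add_le_add ?_ ?_) ?_
    · rcases Nat.eq_zero_or_pos a with rfl | ha
      · simp
      · have := key (k := a) hC₁ k₁ hA (fun _ => i₁)
        rwa [show a - 1 + b + 1 = a + b by omega, ← e] at this
    · rcases Nat.eq_zero_or_pos b with rfl | hb
      · simp
      · have := key (k := b) hC₂ k₂ hA (fun _ => i₂)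
        rwa [show a + (b - 1) + 1 = a + b by omega, ← e] at this
    · rw [abs_mul, abs_mul, Nat.abs_cast]
      calc (q : ℝ) * |r| * |m a b p (q - 1)|
          ≤ q * |r| * (C₃ * wickBd r A (a + b) (p + (q - 1))) := by gcongr
        _ = q * C₃ * (|r| * wickBd r A (a + b) (p + (q - 1))) := by ring
        _ ≤ q * C₃ * (2 * wickBd r A (a + b) (p + 1 + q)) := by
          exact mul_le_mul_of_nonneg_left (abs_mul_wickBd hA hr _ _ _) (by positivity)
        _ = _ := by ring

/-- The absolute moments of the standard Gaussian law. -/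
def gaussMom (k : ℕ) : ℝ := ∫ x, |x| ^ k ∂gaussianReal 0 1

lemma gaussMom_nonneg (k : ℕ) : 0 ≤ gaussMom k :=
  integral_nonneg fun _ => pow_nonneg (abs_nonneg _) k

lemma integral_abs_pow_le {P : Measure Ω} {X : Ω → ℝ} (hX : Measurable X) {v : ℝ≥0} {A : ℝ}
    (hA : 0 ≤ A) (hv : (v : ℝ) ≤ A ^ 2) (h : P.map X = gaussianReal 0 v) (k : ℕ) :
    ∫ ω, |X ω| ^ k ∂P ≤ gaussMom k * A ^ k := by
  have e : gaussianReal 0 v = (gaussianReal 0 1).map (fun x => √(v : ℝ) * x) := by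
    rw [gaussianReal_map_const_mul]
    congr 1
    · simp
    · ext; simp
  have h1 : ∫ ω, |X ω| ^ k ∂P = ∫ x, |x| ^ k ∂(P.map X) := by
    rw [integral_map hX.aemeasurable (by fun_prop)]
  rw [h1, h, e, integral_map (by fun_prop) (by fun_prop)]
  simp only [abs_mul, mul_pow]
  rw [integral_const_mul, mul_comm, gaussMom]
  refine mul_le_mul_of_nonneg_left ?_ (gaussMom_nonneg k)
  refine pow_le_pow_left₀ (abs_nonneg _) ?_ k
  rw [abs_of_nonneg (Real.sqrt_nonneg _)]
  exact Real.sqrt_le_iff.2 ⟨hA, hv⟩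

lemma abs_pow_mul_pow_le (x y : ℝ) (a b : ℕ) :
    |x ^ a * y ^ b| ≤ |x| ^ (a + b) + |y| ^ (a + b) := by
  rw [abs_mul, abs_pow, abs_pow]
  rcases le_total |x| |y| with h | h
  · calc |x| ^ a * |y| ^ b ≤ |y| ^ a * |y| ^ b := by gcongr
      _ = |y| ^ (a + b) := (pow_add _ _ _).symm
      _ ≤ _ := le_add_of_nonneg_left (by positivity)
  · calc |x| ^ a * |y| ^ b ≤ |x| ^ a * |x| ^ b := by gcongr
      _ = |x| ^ (a + b) := (pow_add _ _ _).symm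
      _ ≤ _ := le_add_of_nonneg_right (by positivity)

lemma Hq_zero (t : ℝ) : Hq 0 t = 1 := by simp [Hq]

/-- The fundamental moment estimate `E[U^i H_q(ξ) V^i H_q(η)] = O(|E[ξη]| A^{2i} + A^{2i-2q})`
(the second term being absent if `q > i`), for jointly Gaussian variables with `ξ, η`
standard and `U, V` of standard deviation at most `A`. -/
lemma moment_bound (i q : ℕ) : ∃ C : ℝ, 0 ≤ C ∧
    ∀ (Ω : Type) (_ : MeasurableSpace Ω) (P : Measure Ω) (_ : IsProbabilityMeasure P)
      (n : ℕ) (W : Ω → Fin n → ℝ), HasGaussianLaw W P → Measurable W →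
      (∀ L : (Fin n → ℝ) →L[ℝ] ℝ, ∫ ω, L (W ω) ∂P = 0) →
      ∀ (e h u v : (Fin n → ℝ) →L[ℝ] ℝ) (A : ℝ), 1 ≤ A →
      P.map (fun ω => e (W ω)) = gaussianReal 0 1 → P.map (fun ω => h (W ω)) = gaussianReal 0 1 →
      (∃ s : ℝ≥0, (s : ℝ) ≤ A ^ 2 ∧ P.map (fun ω => u (W ω)) = gaussianReal 0 s) →
      (∃ s : ℝ≥0, (s : ℝ) ≤ A ^ 2 ∧ P.map (fun ω => v (W ω)) = gaussianReal 0 s) →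
      |∫ ω, e (W ω) * u (W ω) ∂P| ≤ 1 → |∫ ω, e (W ω) * v (W ω) ∂P| ≤ 1 →
      |∫ ω, h (W ω) * u (W ω) ∂P| ≤ 1 → |∫ ω, h (W ω) * v (W ω) ∂P| ≤ 1 →
      |∫ ω, e (W ω) * h (W ω) ∂P| ≤ 1 →
      |∫ ω, (u (W ω) ^ i * Hq q (e (W ω))) * (v (W ω) ^ i * Hq q (h (W ω))) ∂P|
        ≤ C * wickBd (∫ ω, e (W ω) * h (W ω) ∂P) A (i + i) (q + q) := by
  obtain ⟨C, hC, H⟩ := wick_rec (fun k => gaussMom k + gaussMom k)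
    (fun k => add_nonneg (gaussMom_nonneg k) (gaussMom_nonneg k)) q q i i
  refine ⟨C, hC, ?_⟩
  intro Ω _ P _ n W hW hWm hmean e h u v A hA he hh hu hv eu ev hu' hv' eh
  obtain ⟨s, hs, hu⟩ := hu
  obtain ⟨s', hs', hv⟩ := hv
  have AL : ∀ L : (Fin n → ℝ) →L[ℝ] ℝ, AllLp P (fun ω => L (W ω)) := allLp_of_gaussian hW
  have hm : ∀ L : (Fin n → ℝ) →L[ℝ] ℝ, Measurable (fun ω => L (W ω)) := fun L =>
    L.continuous.measurable.comp hWm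
  have key := H (fun a b p q => ∫ ω, Hq p (e (W ω)) *
    ((u (W ω)) ^ a * (v (W ω)) ^ b * Hq q (h (W ω))) ∂P) _ _ _ _ _ A eu ev hu' hv' eh hA
    ?_ ?_ ?_
  · convert key using 4
    ring
  · intro a b
    simp only [Hq_zero, one_mul, mul_one]
    have I : ∀ (L : (Fin n → ℝ) →L[ℝ] ℝ) (k : ℕ), Integrable (fun ω => |L (W ω)| ^ k) P := by
      intro L k
      have := ((AL L).pow k).integrable.abs
      simpa only [abs_pow] using this
    calc |∫ ω, u (W ω) ^ a * v (W ω) ^ b ∂P|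
        ≤ ∫ ω, |u (W ω) ^ a * v (W ω) ^ b| ∂P := abs_integral_le_integral_abs
      _ ≤ ∫ ω, (|u (W ω)| ^ (a + b) + |v (W ω)| ^ (a + b)) ∂P := by
        refine integral_mono (((AL u).pow a).mul ((AL v).pow b)).integrable.abs
          ((I u _).add (I v _)) fun ω => abs_pow_mul_pow_le _ _ _ _
      _ = ∫ ω, |u (W ω)| ^ (a + b) ∂P + ∫ ω, |v (W ω)| ^ (a + b) ∂P :=
        integral_add (I u _) (I v _)
      _ ≤ _ := by
        rw [add_mul]
        exact add_le_add (integral_abs_pow_le (hm u) (by linarith) hs hu _)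
          (integral_abs_pow_le (hm v) (by linarith) hs' hv _)
  · intro a b q
    have := gauss_ibp hW hWm hmean h u v h hh a b q 0
    simp only [Hq_zero, mul_one, one_mul, Nat.cast_zero, zero_mul, add_zero] at this ⊢
    convert this using 3
    · ring
    · congr 1; ext; ring
    · congr 1; ext; ring
  · intro a b p q
    exact gauss_ibp hW hWm hmean e u v h he a b p q

/-! ### Increments of fractional Brownian motion -/

lemma abs_rpow_sub_le {p : ℝ} (hp0 : 0 ≤ p) (hp1 : p ≤ 1) {x y : ℝ} (h : |x - y| ≤ 1) :
    |x| ^ p ≤ |y| ^ p + 1 := by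
  calc |x| ^ p ≤ (|y| + |x - y|) ^ p := by
        refine Real.rpow_le_rpow (abs_nonneg _) ?_ hp0
        have := abs_add_le y (x - y)
        simpa using this
    _ ≤ |y| ^ p + |x - y| ^ p := Real.rpow_add_le_add_rpow (abs_nonneg _) (abs_nonneg _) hp0 hp1
    _ ≤ |y| ^ p + 1 := by gcongr; exact Real.rpow_le_one (abs_nonneg _) h hp0

/-- Covariance of the rescaled increments `z_b - z_a` and `z_d - z_c`. -/
def incCov (ν : ℝ) (a b c d : ℕ) : ℝ :=
  (|(d : ℝ) - a| ^ (2 * ν) - |(c : ℝ) - a| ^ (2 * ν)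
    + (|(c : ℝ) - b| ^ (2 * ν) - |(d : ℝ) - b| ^ (2 * ν))) / 2

lemma abs_incCov_le {ν : ℝ} (h0 : 0 < ν) (h1 : ν < 1 / 2) (a b c : ℕ) :
    |incCov ν a b c (c + 1)| ≤ 1 := by
  have hp0 : 0 ≤ 2 * ν := by linarith
  have hp1 : 2 * ν ≤ 1 := by linarith
  have k1 : ∀ y : ℕ, |((c + 1 : ℕ) : ℝ) - y| ^ (2 * ν) ≤ |(c : ℝ) - y| ^ (2 * ν) + 1 :=
    fun y => abs_rpow_sub_le hp0 hp1 (by push_cast; ring_nf; simp)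
  have k2 : ∀ y : ℕ, |(c : ℝ) - y| ^ (2 * ν) ≤ |((c + 1 : ℕ) : ℝ) - y| ^ (2 * ν) + 1 :=
    fun y => abs_rpow_sub_le hp0 hp1 (by push_cast; ring_nf; simp)
  rw [abs_le]
  unfold incCov
  constructor <;> linarith [k1 a, k2 a, k1 b, k2 b]

/-- Increments `(m+1)^{2ν} - m^{2ν}`, nonnegative and nonincreasing in `m`. -/
def powInc (ν : ℝ) (m : ℕ) : ℝ := ((m : ℝ) + 1) ^ (2 * ν) - (m : ℝ) ^ (2 * ν)

lemma powInc_nonneg {ν : ℝ} (h0 : 0 < ν) (m : ℕ) : 0 ≤ powInc ν m :=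
  sub_nonneg.2 (Real.rpow_le_rpow (by positivity) (by linarith) (by linarith))

lemma powInc_succ_le {ν : ℝ} (h0 : 0 < ν) (h1 : ν < 1 / 2) (m : ℕ) :
    powInc ν (m + 1) ≤ powInc ν m := by
  have hc : ConcaveOn ℝ (Set.Ici 0) fun x : ℝ => x ^ (2 * ν) :=
    Real.concaveOn_rpow (by linarith) (by linarith)
  have h := hc.2 (show (m : ℝ) ∈ Set.Ici 0 from Set.mem_Ici.2 (Nat.cast_nonneg m))
    (show (m : ℝ) + 2 ∈ Set.Ici 0 from by simp only [Set.mem_Ici]; positivity)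
    (show (0 : ℝ) ≤ 1 / 2 by norm_num) (show (0 : ℝ) ≤ 1 / 2 by norm_num) (by norm_num)
  simp only [smul_eq_mul] at h
  rw [show (1 / 2 : ℝ) * m + 1 / 2 * (m + 2) = m + 1 by ring] at h
  unfold powInc
  push_cast
  rw [show (m : ℝ) + 1 + 1 = m + 2 by ring]
  linarith

/-- Correlation of two unit increments at distance `m`, in absolute value. -/
def absCorr (ν : ℝ) (m : ℕ) : ℝ := |incCov ν 0 1 m (m + 1)|

lemma absCorr_zero {ν : ℝ} (h0 : 0 < ν) : absCorr ν 0 = 1 := by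
  have : (2 * ν) ≠ 0 := by positivity
  simp [absCorr, incCov, Real.zero_rpow this]

lemma absCorr_succ {ν : ℝ} (h0 : 0 < ν) (h1 : ν < 1 / 2) (m : ℕ) :
    absCorr ν (m + 1) = (powInc ν m - powInc ν (m + 1)) / 2 := by
  have h := powInc_succ_le h0 h1 m
  have e : incCov ν 0 1 (m + 1) (m + 1 + 1) = -((powInc ν m - powInc ν (m + 1)) / 2) := by
    have hm : (0 : ℝ) ≤ m := Nat.cast_nonneg m
    unfold incCov powInc
    push_cast
    simp only [sub_zero, add_sub_cancel_right]
    rw [abs_of_nonneg hm, abs_of_nonneg (by linarith : (0 : ℝ) ≤ m + 1),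
      abs_of_nonneg (by linarith : (0 : ℝ) ≤ m + 1 + 1)]
    ring
  rw [absCorr, e, abs_neg, abs_of_nonneg (by linarith)]

/-- The correlations of unit increments are summable: since `ν < 1/2` they telescope. -/
lemma sum_absCorr_le {ν : ℝ} (h0 : 0 < ν) (h1 : ν < 1 / 2) (M : ℕ) :
    ∑ m ∈ Finset.range M, absCorr ν m ≤ 3 / 2 := by
  cases M with
  | zero => norm_num
  | succ M =>
    rw [Finset.sum_range_succ', absCorr_zero h0]
    simp only [absCorr_succ h0 h1]
    rw [← Finset.sum_div, Finset.sum_range_sub']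
    have h2 : powInc ν 0 = 1 := by
      simp [powInc, Real.zero_rpow (by positivity : (2 * ν) ≠ 0)]
    have := powInc_nonneg h0 M
    linarith

lemma abs_incCov_eq (ν : ℝ) (k m : ℕ) :
    |incCov ν k (k + 1) (k + m) (k + m + 1)| = absCorr ν m := by
  unfold absCorr incCov
  push_cast
  congr 5 <;> ring_nf

lemma abs_incCov_eq' (ν : ℝ) (k m : ℕ) :
    |incCov ν (k + m) (k + m + 1) k (k + 1)| = absCorr ν m := by
  unfold absCorr incCov
  push_cast
  rw [show (k : ℝ) + 1 - (k + m) = -(m - 1) by ring, show (k : ℝ) - (k + m) = -m by ring,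
    show (k : ℝ) - (k + m + 1) = -(m + 1) by ring,
    show (k : ℝ) + 1 - (k + m + 1) = -m by ring, show (m : ℝ) + 1 - 1 = m by ring]
  simp only [abs_neg, sub_zero]
  congr 1
  ring

lemma sum_incCov_le {ν : ℝ} (h0 : 0 < ν) (h1 : ν < 1 / 2) {a b k : ℕ} (hak : a ≤ k) (hkb : k < b) :
    ∑ l ∈ Finset.Ico a b, |incCov ν k (k + 1) l (l + 1)| ≤ 3 := by
  rw [← Finset.sum_Ico_consecutive _ hak hkb.le]
  have e1 : ∑ l ∈ Finset.Ico k b, |incCov ν k (k + 1) l (l + 1)|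
      = ∑ m ∈ Finset.range (b - k), absCorr ν m := by
    rw [Finset.sum_Ico_eq_sum_range]
    exact Finset.sum_congr rfl fun m _ => abs_incCov_eq ν k m
  have e2 : ∑ l ∈ Finset.Ico a k, |incCov ν k (k + 1) l (l + 1)|
      ≤ ∑ m ∈ Finset.range (k + 1), absCorr ν m := by
    have : ∀ l ∈ Finset.Ico a k, |incCov ν k (k + 1) l (l + 1)| = absCorr ν (k - l) := by
      intro l hl
      obtain ⟨m, rfl⟩ := Nat.exists_eq_add_of_le (Finset.mem_Ico.1 hl).2.le
      rw [abs_incCov_eq', Nat.add_sub_cancel_left]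
    rw [Finset.sum_congr rfl this, ← Finset.sum_range_reflect, Finset.range_eq_Ico]
    exact Finset.sum_le_sum_of_subset_of_nonneg
      (Finset.Ico_subset_Ico (Nat.zero_le _) (Nat.le_succ k)) fun _ _ _ => abs_nonneg _
  have := sum_absCorr_le h0 h1 (b - k)
  have := sum_absCorr_le h0 h1 (k + 1)
  linarith

section FBM

variable {P : Measure Ω} {ν : ℝ} {x : ℝ → Ω → ℝ}

/-- The rescaled values `n^ν x_{k/n}`, whose increments over unit steps are standard Gaussian. -/
def fbmVec (x : ℝ → Ω → ℝ) (ν : ℝ) (n : ℕ) (ω : Ω) (k : Fin (n + 1)) : ℝ :=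
  (n : ℝ) ^ ν * x ((k : ℕ) / n) ω

/-- The linear functional extracting the increment from `a` to `b`. -/
def incFun (n : ℕ) (a b : Fin (n + 1)) : (Fin (n + 1) → ℝ) →L[ℝ] ℝ :=
  ContinuousLinearMap.proj (R := ℝ) (φ := fun _ : Fin (n + 1) => ℝ) b
    - ContinuousLinearMap.proj (R := ℝ) (φ := fun _ : Fin (n + 1) => ℝ) a

lemma incFun_apply (n : ℕ) (a b : Fin (n + 1)) (w : Fin (n + 1) → ℝ) :
    incFun n a b w = w b - w a := rfl

lemma fbmVec_measurable (hx : IsFBM P ν x) (n : ℕ) : Measurable (fbmVec x ν n) :=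
  measurable_pi_lambda _ fun _ => (hx.1 _).const_mul _

lemma fbm_point_mem {n : ℕ} (k : Fin (n + 1)) : ((k : ℕ) : ℝ) / n ∈ Set.Icc (0 : ℝ) 1 := by
  refine ⟨by positivity, div_le_one_of_le₀ ?_ (Nat.cast_nonneg n)⟩
  exact_mod_cast Nat.lt_succ_iff.1 k.2

lemma fbmVec_map (hx : IsFBM P ν x) (n : ℕ) (L : (Fin (n + 1) → ℝ) →L[ℝ] ℝ) :
    ∃ v : ℝ≥0, P.map (fun ω => L (fbmVec x ν n ω)) = gaussianReal 0 v := by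
  have h := hx.2.2 (n + 1) (fun k => ((k : ℕ) : ℝ) / n) fbm_point_mem
    (fun k => L (Pi.single k 1) * (n : ℝ) ^ ν)
  refine ⟨_, Eq.trans ?_ h⟩
  congr 1
  ext ω
  conv_lhs => rw [← Finset.univ_sum_single (fbmVec x ν n ω), map_sum]
  refine Finset.sum_congr rfl fun k _ => ?_
  have : Pi.single k (fbmVec x ν n ω k) = fbmVec x ν n ω k • (Pi.single k (1 : ℝ)) := by
    rw [← Pi.single_smul]; simp
  rw [this, map_smul, fbmVec, smul_eq_mul]
  ring

lemma fbmVec_gaussian (hx : IsFBM P ν x) (n : ℕ) : HasGaussianLaw (fbmVec x ν n) P := by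
  refine ⟨isGaussian_of_map_eq_gaussianReal fun L => ?_⟩
  obtain ⟨v, hv⟩ := fbmVec_map hx n L
  refine ⟨0, v, ?_⟩
  rw [← hv, Measure.map_map L.continuous.measurable (fbmVec_measurable hx n)]
  rfl

lemma fbmVec_mean (hx : IsFBM P ν x) (n : ℕ) (L : (Fin (n + 1) → ℝ) →L[ℝ] ℝ) :
    ∫ ω, L (fbmVec x ν n ω) ∂P = 0 := by
  obtain ⟨v, hv⟩ := fbmVec_map hx n L
  have h := integral_id_gaussianReal (μ := 0) (v := v)
  have hm : Measurable (fun ω => L (fbmVec x ν n ω)) :=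
    L.continuous.measurable.comp (fbmVec_measurable hx n)
  rwa [← hv, integral_map hm.aemeasurable (by fun_prop)] at h

lemma fbmVec_inc (hν : 0 < ν) (hx : IsFBM P ν x) {n : ℕ} (hn : 1 ≤ n) (a b : Fin (n + 1)) :
    P.map (fun ω => incFun n a b (fbmVec x ν n ω))
      = gaussianReal 0 (|((b : ℕ) : ℝ) - (a : ℕ)| ^ (2 * ν)).toNNReal := by
  have h := hx.2.2 2 ![((b : ℕ) : ℝ) / n, ((a : ℕ) : ℝ) / n]
    (by intro j; fin_cases j <;> exact fbm_point_mem _) ![(n : ℝ) ^ ν, -(n : ℝ) ^ ν]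
  have hn' : (0 : ℝ) < n := by exact_mod_cast hn
  have hp : 2 * ν ≠ 0 := by positivity
  simp only [Fin.sum_univ_two, Matrix.cons_val_zero, Matrix.cons_val_one] at h
  convert h using 2
  · ext ω
    simp only [incFun_apply, fbmVec]
    ring
  · congr 1
    have e1 : ((n : ℝ) ^ ν) * (n : ℝ) ^ ν = (n : ℝ) ^ (2 * ν) := by
      rw [← Real.rpow_add hn', two_mul]
    have e2 : (n : ℝ) ^ (2 * ν) * |((b : ℕ) : ℝ) / n - ((a : ℕ) : ℝ) / n| ^ (2 * ν)
        = |((b : ℕ) : ℝ) - (a : ℕ)| ^ (2 * ν) := by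
      rw [← Real.mul_rpow hn'.le (abs_nonneg _)]
      congr 1
      rw [← sub_div, abs_div, abs_of_pos hn']
      field_simp
    rw [← e2, ← e1]
    simp only [fbmCov, sub_self, abs_zero, Real.zero_rpow hp]
    rw [abs_sub_comm (((a : ℕ) : ℝ) / n)]
    ring

lemma fbmVec_sq [IsProbabilityMeasure P] (hν : 0 < ν) (hx : IsFBM P ν x) {n : ℕ} (hn : 1 ≤ n)
    (a b : Fin (n + 1)) :
    ∫ ω, (incFun n a b (fbmVec x ν n ω)) ^ 2 ∂P = |((b : ℕ) : ℝ) - (a : ℕ)| ^ (2 * ν) := by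
  have h := fbmVec_inc hν hx hn a b
  set v := (|((b : ℕ) : ℝ) - (a : ℕ)| ^ (2 * ν)).toNNReal with hv
  have h1 := variance_fun_id_gaussianReal (μ := 0) (v := v)
  rw [variance_of_integral_eq_zero (by fun_prop) (by simp)] at h1
  have hm : Measurable (fun ω => incFun n a b (fbmVec x ν n ω)) :=
    (incFun n a b).continuous.measurable.comp (fbmVec_measurable hx n)
  rw [← h, integral_map hm.aemeasurable (by fun_prop)] at h1
  rw [h1, hv, Real.coe_toNNReal _ (by positivity)]

/-- The covariance of increments, by polarization of their variances. -/
lemma fbmVec_cov [IsProbabilityMeasure P] (hν : 0 < ν) (hx : IsFBM P ν x) {n : ℕ} (hn : 1 ≤ n)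
    (a b c d : Fin (n + 1)) :
    ∫ ω, incFun n c d (fbmVec x ν n ω) * incFun n a b (fbmVec x ν n ω) ∂P
      = incCov ν a b c d := by
  have I : ∀ a b : Fin (n + 1), Integrable (fun ω => (incFun n a b (fbmVec x ν n ω)) ^ 2) P :=
    fun a b => ((allLp_of_gaussian (fbmVec_gaussian hx n) _).pow 2).integrable
  have e : ∀ ω, incFun n c d (fbmVec x ν n ω) * incFun n a b (fbmVec x ν n ω)
      = (((incFun n a d (fbmVec x ν n ω)) ^ 2 - (incFun n a c (fbmVec x ν n ω)) ^ 2)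
        + ((incFun n b c (fbmVec x ν n ω)) ^ 2 - (incFun n b d (fbmVec x ν n ω)) ^ 2)) / 2 := by
    intro ω
    simp only [incFun_apply]
    ring
  simp only [e]
  have S : ∀ a b c d : Fin (n + 1), Integrable (fun ω => (incFun n a b (fbmVec x ν n ω)) ^ 2
      - (incFun n c d (fbmVec x ν n ω)) ^ 2) P := fun a b c d => (I a b).sub (I c d)
  rw [integral_div, integral_add (S _ _ _ _) (S _ _ _ _),
    integral_sub (I _ _) (I _ _), integral_sub (I _ _) (I _ _)]
  simp only [fbmVec_sq hν hx hn]
  rfl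

end FBM

/-! ### The second moment of the discrete integral -/

/-- The `k`-th summand of the discrete integral after rescaling time by `n` and space by `n^ν`. -/
def summand (x : ℝ → Ω → ℝ) (ν : ℝ) (n i q a k : ℕ) (ω : Ω) : ℝ :=
  ((n : ℝ) ^ ν * x ((k : ℝ) / n) ω - (n : ℝ) ^ ν * x ((a : ℝ) / n) ω) ^ i
    * Hq q ((n : ℝ) ^ ν * x (((k : ℝ) + 1) / n) ω - (n : ℝ) ^ ν * x ((k : ℝ) / n) ω)

lemma summand_eq (x : ℝ → Ω → ℝ) (ν : ℝ) {n i q a k : ℕ} (ha : a ≤ n) (hk : k < n) (ω : Ω) :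
    summand x ν n i q a k ω
      = (incFun n (Fin.ofNat (n + 1) a) (Fin.ofNat (n + 1) k) (fbmVec x ν n ω)) ^ i
        * Hq q (incFun n (Fin.ofNat (n + 1) k) (Fin.ofNat (n + 1) (k + 1)) (fbmVec x ν n ω)) := by
  have e1 : a % (n + 1) = a := Nat.mod_eq_of_lt (by omega)
  have e2 : k % (n + 1) = k := Nat.mod_eq_of_lt (by omega)
  have e3 : (k + 1) % (n + 1) = k + 1 := Nat.mod_eq_of_lt (by omega)
  simp only [summand, incFun_apply, fbmVec, Fin.val_ofNat, e1, e2, e3]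
  push_cast
  rfl

lemma summand_allLp {P : Measure Ω} [IsProbabilityMeasure P] {ν : ℝ} {x : ℝ → Ω → ℝ}
    (hx : IsFBM P ν x) {n a k : ℕ} (i q : ℕ) (ha : a ≤ n) (hk : k < n) :
    AllLp P (summand x ν n i q a k) := by
  have h := fbmVec_gaussian hx n
  rw [funext (summand_eq (i := i) (q := q) x ν ha hk)]
  exact ((allLp_of_gaussian h _).pow i).mul ((allLp_of_gaussian h _).Hq q)

lemma summand_bound {ν : ℝ} (h0 : 0 < ν) (h1 : ν < 1 / 2) (i q : ℕ) : ∃ C : ℝ, 0 ≤ C ∧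
    ∀ (Ω : Type) (_ : MeasurableSpace Ω) (P : Measure Ω), IsProbabilityMeasure P →
      ∀ x : ℝ → Ω → ℝ, IsFBM P ν x → ∀ n a b k l : ℕ, b ≤ n → a ≤ k → k < b → a ≤ l → l < b →
      ∫ ω, summand x ν n i q a k ω * summand x ν n i q a l ω ∂P
        ≤ C * wickBd (incCov ν l (l + 1) k (k + 1)) (((b : ℝ) - a) ^ ν) (i + i) (q + q) := by
  obtain ⟨C, hC, H⟩ := moment_bound i q
  refine ⟨C, hC, ?_⟩
  intro Ω _ P hP x hx n a b k l hb hak hkb hal hlb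
  have hn : 1 ≤ n := by omega
  have val : ∀ j ≤ n, ((Fin.ofNat (n + 1) j : Fin (n + 1)) : ℕ) = j := fun j hj =>
    Nat.mod_eq_of_lt (by omega)
  have unit : ∀ j < n, P.map (fun ω => incFun n (Fin.ofNat (n + 1) j) (Fin.ofNat (n + 1) (j + 1))
      (fbmVec x ν n ω)) = gaussianReal 0 1 := by
    intro j hj
    rw [fbmVec_inc h0 hx hn, val j hj.le, val (j + 1) hj]
    simp
  have large : ∀ j, a ≤ j → j < b → ∃ s : ℝ≥0, (s : ℝ) ≤ (((b : ℝ) - a) ^ ν) ^ 2 ∧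
      P.map (fun ω => incFun n (Fin.ofNat (n + 1) a) (Fin.ofNat (n + 1) j)
        (fbmVec x ν n ω)) = gaussianReal 0 s := by
    intro j haj hjb
    refine ⟨_, ?_, fbmVec_inc h0 hx hn _ _⟩
    have haj' : (a : ℝ) ≤ j := by exact_mod_cast haj
    have hjb' : (j : ℝ) ≤ b := by exact_mod_cast hjb.le
    rw [val a (by omega), val j (by omega), Real.coe_toNNReal _ (by positivity),
      abs_of_nonneg (by linarith), ← Real.rpow_natCast, ← Real.rpow_mul (by linarith),
      mul_comm ν]
    push_cast
    exact Real.rpow_le_rpow (by linarith) (by linarith) (by linarith)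
  have cov : ∀ (j j' m : ℕ), j ≤ n → j' ≤ n → m < n →
      ∫ ω, incFun n (Fin.ofNat (n + 1) m) (Fin.ofNat (n + 1) (m + 1)) (fbmVec x ν n ω)
        * incFun n (Fin.ofNat (n + 1) j) (Fin.ofNat (n + 1) j') (fbmVec x ν n ω) ∂P
        = incCov ν j j' m (m + 1) := by
    intro j j' m hj hj' hm
    rw [fbmVec_cov h0 hx hn, val j hj, val j' hj', val m hm.le, val (m + 1) hm]
  have cov1 : ∀ (j j' m : ℕ), j ≤ n → j' ≤ n → m < n →
      |∫ ω, incFun n (Fin.ofNat (n + 1) m) (Fin.ofNat (n + 1) (m + 1)) (fbmVec x ν n ω)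
        * incFun n (Fin.ofNat (n + 1) j) (Fin.ofNat (n + 1) j') (fbmVec x ν n ω) ∂P| ≤ 1 := by
    intro j j' m hj hj' hm
    rw [cov j j' m hj hj' hm]
    exact abs_incCov_le h0 h1 _ _ _
  have hA : (1 : ℝ) ≤ ((b : ℝ) - a) ^ ν := by
    refine Real.one_le_rpow ?_ h0.le
    have : (a : ℝ) + 1 ≤ b := by exact_mod_cast (by omega : a + 1 ≤ b)
    linarith
  have := H Ω _ P hP (n + 1) (fbmVec x ν n) (fbmVec_gaussian hx n) (fbmVec_measurable hx n)
    (fbmVec_mean hx n) _ _ _ _ _ hA (unit k (by omega)) (unit l (by omega))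
    (large k hak hkb) (large l hal hlb)
    (cov1 _ _ _ (by omega) (by omega) (by omega)) (cov1 _ _ _ (by omega) (by omega) (by omega))
    (cov1 _ _ _ (by omega) (by omega) (by omega)) (cov1 _ _ _ (by omega) (by omega) (by omega))
    (cov1 _ _ _ (by omega) (by omega) (by omega))
  rw [cov l (l + 1) k (by omega) (by omega) (by omega)] at this
  simp only [← summand_eq (i := i) (q := q) x ν (by omega : a ≤ n) (by omega : k < n),
    ← summand_eq (i := i) (q := q) x ν (by omega : a ≤ n) (by omega : l < n)] at this
  exact (le_abs_self _).trans this

/-- Since the correlations are summable, the part proportional to them contributes a single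
factor `b - a`; the other part contributes two. -/
lemma sum_wickBd_le {ν : ℝ} (h0 : 0 < ν) (h1 : ν < 1 / 2) (s d a b : ℕ) (hab : a < b) :
    ∑ k ∈ Finset.Ico a b, ∑ l ∈ Finset.Ico a b,
        wickBd (incCov ν l (l + 1) k (k + 1)) (((b : ℝ) - a) ^ ν) s d
      ≤ 3 * ((b : ℝ) - a) * (((b : ℝ) - a) ^ ν) ^ s
        + ((b : ℝ) - a) ^ 2 * if d ≤ s then (((b : ℝ) - a) ^ ν) ^ (s - d) else 0 := by
  set A := ((b : ℝ) - a) ^ ν with hA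
  have hN : (0 : ℝ) ≤ (b : ℝ) - a := sub_nonneg.2 (by exact_mod_cast hab.le)
  have hA0 : 0 ≤ A := Real.rpow_nonneg hN ν
  have hc : ((Finset.Ico a b).card : ℝ) = (b : ℝ) - a := by
    rw [Nat.card_Ico, Nat.cast_sub hab.le]
  rw [Finset.sum_comm]
  have inner : ∀ l ∈ Finset.Ico a b, ∑ k ∈ Finset.Ico a b,
      wickBd (incCov ν l (l + 1) k (k + 1)) A s d
      ≤ 3 * A ^ s + ((b : ℝ) - a) * if d ≤ s then A ^ (s - d) else 0 := by
    intro l hl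
    rw [Finset.mem_Ico] at hl
    simp only [wickBd]
    rw [Finset.sum_add_distrib, ← Finset.sum_mul, Finset.sum_const, nsmul_eq_mul, hc]
    gcongr
    exact sum_incCov_le h0 h1 hl.1 hl.2
  refine (Finset.sum_le_sum inner).trans_eq ?_
  rw [Finset.sum_const, nsmul_eq_mul, hc]
  ring

lemma eps_natCast {n : ℕ} (hn : 1 ≤ n) (a : ℕ) : eps n ((a : ℝ) / n) = (a : ℝ) / n := by
  have : (n : ℝ) ≠ 0 := by positivity
  rw [eps, mul_div_cancel₀ _ this]
  simp

/-- The discrete integral in terms of the rescaled summands. -/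
lemma Jtwo_eq (x : ℝ → Ω → ℝ) (ν : ℝ) {n : ℕ} (hn : 1 ≤ n) (i q a b : ℕ) (hb : b ≤ n) (ω : Ω) :
    Jtwo n (xlift x i) (hermIncr x ν n q) ((a : ℝ) / n) ((b : ℝ) / n) ω
      = (((n : ℝ) ^ ν) ^ i * (Nat.factorial i : ℝ))⁻¹
        * ∑ k ∈ Finset.Ico a b, summand x ν n i q a k ω := by
  have hn' : (0 : ℝ) < n := by exact_mod_cast hn
  have hp : (n : ℝ) ^ ν ≠ 0 := (Real.rpow_pos_of_pos hn' ν).ne'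
  have hf : (Nat.factorial i : ℝ) ≠ 0 := by positivity
  rw [Jtwo, ← Finset.sum_filter]
  have hs : Finset.filter (fun k : ℕ => (a : ℝ) / n ≤ (k : ℝ) / n ∧ (k : ℝ) / n < (b : ℝ) / n)
      (Finset.range n) = Finset.Ico a b := by
    ext k
    simp only [Finset.mem_filter, Finset.mem_range, Finset.mem_Ico,
      div_le_div_iff_of_pos_right hn', div_lt_div_iff_of_pos_right hn', Nat.cast_le, Nat.cast_lt]
    omega
  rw [hs, Finset.mul_sum]
  refine Finset.sum_congr rfl fun k _ => ?_
  rw [eps_natCast hn, xlift, hermIncr, summand, ← mul_sub, ← mul_sub, mul_pow]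
  field_simp

/-- The second moment bound before specialization to the two regimes. -/
lemma second_moment {ν : ℝ} (h0 : 0 < ν) (h1 : ν < 1 / 2) (i q : ℕ) : ∃ C : ℝ, 0 ≤ C ∧
    ∀ (Ω : Type) (_ : MeasurableSpace Ω) (P : Measure Ω), IsProbabilityMeasure P →
      ∀ x : ℝ → Ω → ℝ, IsFBM P ν x → ∀ n a b : ℕ, a < b → b ≤ n →
      ∫ ω, (Jtwo n (xlift x i) (hermIncr x ν n q) ((a : ℝ) / n) ((b : ℝ) / n) ω) ^ 2 ∂P
        ≤ C * (n : ℝ) ^ (-(2 * (i : ℝ) * ν)) *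
          (3 * ((b : ℝ) - a) ^ (2 * (i : ℝ) * ν + 1) +
            if q ≤ i then ((b : ℝ) - a) ^ (2 + 2 * (i : ℝ) * ν - 2 * (q : ℝ) * ν) else 0) := by
  obtain ⟨C, hC, H⟩ := summand_bound h0 h1 i q
  refine ⟨C, hC, ?_⟩
  intro Ω _ P hP x hx n a b hab hb
  have hn : 1 ≤ n := by omega
  have hn' : (0 : ℝ) < n := by exact_mod_cast hn
  have hN : (0 : ℝ) < (b : ℝ) - a := sub_pos.2 (by exact_mod_cast hab)
  have I : ∀ k ∈ Finset.Ico a b, AllLp P (summand x ν n i q a k) := fun k hk => by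
    rw [Finset.mem_Ico] at hk
    exact summand_allLp hx i q (by omega) (by omega)
  have e : ∫ ω, (∑ k ∈ Finset.Ico a b, summand x ν n i q a k ω) ^ 2 ∂P
      = ∑ k ∈ Finset.Ico a b, ∑ l ∈ Finset.Ico a b,
        ∫ ω, summand x ν n i q a k ω * summand x ν n i q a l ω ∂P := by
    simp only [sq, Finset.sum_mul_sum]
    rw [integral_finsetSum _ fun k hk => integrable_finsetSum _ fun l hl =>
      ((I k hk).mul (I l hl)).integrable]
    exact Finset.sum_congr rfl fun k hk => integral_finsetSum _ fun l hl =>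
      ((I k hk).mul (I l hl)).integrable
  have hsum : ∫ ω, (∑ k ∈ Finset.Ico a b, summand x ν n i q a k ω) ^ 2 ∂P
      ≤ C * (3 * ((b : ℝ) - a) ^ (2 * (i : ℝ) * ν + 1) +
            if q ≤ i then ((b : ℝ) - a) ^ (2 + 2 * (i : ℝ) * ν - 2 * (q : ℝ) * ν) else 0) := by
    rw [e]
    calc _ ≤ ∑ k ∈ Finset.Ico a b, ∑ l ∈ Finset.Ico a b,
          C * wickBd (incCov ν l (l + 1) k (k + 1)) (((b : ℝ) - a) ^ ν) (i + i) (q + q) := by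
          refine Finset.sum_le_sum fun k hk => Finset.sum_le_sum fun l hl => ?_
          rw [Finset.mem_Ico] at hk hl
          exact H Ω _ P hP x hx n a b k l hb hk.1 hk.2 hl.1 hl.2
      _ = C * ∑ k ∈ Finset.Ico a b, ∑ l ∈ Finset.Ico a b,
          wickBd (incCov ν l (l + 1) k (k + 1)) (((b : ℝ) - a) ^ ν) (i + i) (q + q) := by
          simp only [Finset.mul_sum]
      _ ≤ C * _ := mul_le_mul_of_nonneg_left (sum_wickBd_le h0 h1 _ _ a b hab) hC
      _ = _ := by
          have p1 : ∀ m : ℕ, (((b : ℝ) - a) ^ ν) ^ m = ((b : ℝ) - a) ^ (ν * m) := fun m => by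
            rw [Real.rpow_mul hN.le, Real.rpow_natCast]
          congr 2
          · rw [p1, Real.rpow_add_one hN.ne']
            push_cast
            rw [show ν * ((i : ℝ) + i) = 2 * i * ν by ring]
            ring
          · by_cases hqi : q ≤ i
            · rw [if_pos hqi, if_pos (by omega), p1, ← Real.rpow_natCast, ← Real.rpow_add hN,
                Nat.cast_sub (by omega)]
              congr 1
              push_cast
              ring
            · rw [if_neg hqi, if_neg (by omega), mul_zero]
  have hc : ((((n : ℝ) ^ ν) ^ i * (Nat.factorial i : ℝ))⁻¹) ^ 2
      ≤ (n : ℝ) ^ (-(2 * (i : ℝ) * ν)) := by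
    have hf : (1 : ℝ) ≤ Nat.factorial i := by exact_mod_cast Nat.factorial_pos i
    have hp : 0 < ((n : ℝ) ^ ν) ^ i := by positivity
    calc ((((n : ℝ) ^ ν) ^ i * (Nat.factorial i : ℝ))⁻¹) ^ 2
        ≤ ((((n : ℝ) ^ ν) ^ i)⁻¹) ^ 2 := by
          gcongr
          exact le_mul_of_one_le_right hp.le hf
      _ = (n : ℝ) ^ (-(2 * (i : ℝ) * ν)) := by
          rw [Real.rpow_neg hn'.le, inv_pow, ← pow_mul, ← Real.rpow_natCast,
            ← Real.rpow_mul hn'.le]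
          congr 2
          push_cast
          ring
  simp only [Jtwo_eq x ν hn i q a b hb, mul_pow]
  rw [integral_const_mul]
  calc _ ≤ (n : ℝ) ^ (-(2 * (i : ℝ) * ν)) *
        ∫ ω, (∑ k ∈ Finset.Ico a b, summand x ν n i q a k ω) ^ 2 ∂P :=
        mul_le_mul_of_nonneg_right hc (integral_nonneg fun _ => sq_nonneg _)
    _ ≤ (n : ℝ) ^ (-(2 * (i : ℝ) * ν)) * (C * _) :=
        mul_le_mul_of_nonneg_left hsum (by positivity)
    _ = _ := by ring

/-- **Second-moment bounds in the low-rank regime** (Lemma 4.8 (ii)): bounds on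
`E[|J_s^t(x^i;h^{n,q})|²]` at partition points, uniform in `n`, with a constant
depending only on `ν`, `i` and `q`. -/
theorem low_rank_second_moment_bounds
    (ν : ℝ) (hν : 0 < ν) (hν2 : ν < 1 / 2)
    (q : ℕ) (hq : 1 ≤ q) (i : ℕ) (hi : 1 ≤ i) (hi2 : (i : ℝ) ≤ 1 / (2 * ν)) :
    ∃ K : ℝ,
      ∀ (Ω : Type) (_ : MeasurableSpace Ω) (P : Measure Ω), IsProbabilityMeasure P →
      ∀ x : ℝ → Ω → ℝ, IsFBM P ν x →
      ∀ n : ℕ, 1 ≤ n → ∀ a b : ℕ, a ≤ b → b ≤ n →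
        ((1 / (2 * ν) ≤ (q : ℝ) ∨ ((q : ℝ) < 1 / (2 * ν) ∧ i < q) →
          (∫ ω, (Jtwo n (xlift x i) (hermIncr x ν n q) ((a : ℝ) / n) ((b : ℝ) / n) ω) ^ 2 ∂P)
            ≤ K * (n : ℝ) * ((b : ℝ) / n - (a : ℝ) / n) ^ (2 * (i : ℝ) * ν + 1)) ∧
        ((q : ℝ) < 1 / (2 * ν) ∧ q ≤ i →
          (∫ ω, (Jtwo n (xlift x i) (hermIncr x ν n q) ((a : ℝ) / n) ((b : ℝ) / n) ω) ^ 2 ∂P)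
            ≤ K * (n : ℝ) ^ (2 - 2 * (q : ℝ) * ν) *
              ((b : ℝ) / n - (a : ℝ) / n) ^ (2 + 2 * (i : ℝ) * ν - 2 * (q : ℝ) * ν))) := by
  obtain ⟨C, hC, H⟩ := second_moment hν hν2 i q
  refine ⟨4 * C, ?_⟩
  intro Ω _ P hP x hx n hn a b hab hb
  have hn' : (0 : ℝ) < n := by exact_mod_cast hn
  rcases hab.eq_or_lt with rfl | hlt
  · have hJ : ∀ ω, Jtwo n (xlift x i) (hermIncr x ν n q) ((a : ℝ) / n) ((a : ℝ) / n) ω = 0 :=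
      fun ω => by simp [Jtwo_eq x ν hn i q a a hb ω]
    simp only [hJ, sub_self]
    constructor <;> intro _ <;> simp <;> positivity
  have hN : (1 : ℝ) ≤ (b : ℝ) - a := by
    have : (a : ℝ) + 1 ≤ b := by exact_mod_cast hlt
    linarith
  have hN0 : (0 : ℝ) < (b : ℝ) - a := by linarith
  have B := H Ω _ P hP x hx n a b hlt hb
  have hpow : (0 : ℝ) ≤ C * (n : ℝ) ^ (-(2 * (i : ℝ) * ν)) := by positivity
  constructor
  · intro hcase
    have h2 : (if q ≤ i then ((b : ℝ) - a) ^ (2 + 2 * (i : ℝ) * ν - 2 * (q : ℝ) * ν) else 0)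
        ≤ ((b : ℝ) - a) ^ (2 * (i : ℝ) * ν + 1) := by
      split_ifs with hqi
      · rcases hcase with h | ⟨_, h⟩
        · refine Real.rpow_le_rpow_of_exponent_le hN ?_
          rw [div_le_iff₀ (by positivity)] at h
          linarith
        · omega
      · positivity
    refine B.trans ((mul_le_mul_of_nonneg_left (add_le_add_right h2 _) hpow).trans_eq ?_)
    rw [← sub_div, Real.div_rpow hN0.le hn'.le, Real.rpow_neg hn'.le, Real.rpow_add_one hn'.ne']
    field_simp
    ring
  · rintro ⟨hq1, hqi⟩
    have h2 : ((b : ℝ) - a) ^ (2 * (i : ℝ) * ν + 1)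
        ≤ ((b : ℝ) - a) ^ (2 + 2 * (i : ℝ) * ν - 2 * (q : ℝ) * ν) := by
      refine Real.rpow_le_rpow_of_exponent_le hN ?_
      rw [lt_div_iff₀ (by positivity)] at hq1
      linarith
    rw [if_pos hqi] at B
    refine B.trans ((mul_le_mul_of_nonneg_left
      (add_le_add_left (mul_le_mul_of_nonneg_left h2 (by norm_num : (0 : ℝ) ≤ 3)) _)
      hpow).trans_eq ?_)
    have e : (n : ℝ) ^ (2 + 2 * (i : ℝ) * ν - 2 * (q : ℝ) * ν)
        = (n : ℝ) ^ (2 - 2 * (q : ℝ) * ν) * (n : ℝ) ^ (2 * (i : ℝ) * ν) := by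
      rw [← Real.rpow_add hn']
      congr 1
      ring
    rw [← sub_div, Real.div_rpow hN0.le hn'.le, Real.rpow_neg hn'.le, e]
    field_simp
    ring

end
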